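/- Let R be a commutative Noetherian local ring and let M be a nonzero finitely generated R-module with finite injective dimension. If M has finite Gorenstein dimension, then R is Gorenstein. -/

import Mathlib

open CategoryTheory Pointwise

universe u

variable (R : Type u) [CommRing R]

/-- `Ext^n_R(X, Y) = 0`. -/
def ExtVanish (X Y : Type u) [AddCommGroup X] [Module R X]
    [AddCommGroup Y] [Module R Y] (n : ℕ) : Prop :=
  Subsingleton (((Ext R (ModuleCat.{u} R) n).obj
    (Opposite.op (ModuleCat.of R X))).obj (ModuleCat.of R Y))

/-- A finitely generated module `X` is totally reflexive if the evaluation map to the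
double dual is bijective and `Ext^i(X, R) = 0 = Ext^i(X^*, R)` for all `i ≥ 1`. -/
def IsTotallyReflexive (X : Type u) [AddCommGroup X] [Module R X] : Prop :=
  Module.Finite R X ∧
  Function.Bijective (Module.Dual.eval R X) ∧
  (∀ i : ℕ, 1 ≤ i → ExtVanish R X R i) ∧
  (∀ i : ℕ, 1 ≤ i → ExtVanish R (Module.Dual R X) R i)

/-- `0 → A → B → C → 0` is a short exact sequence. -/
def IsShortExact {A B C : Type u} [AddCommGroup A] [Module R A] [AddCommGroup B] [Module R B]
    [AddCommGroup C] [Module R C] (f : A →ₗ[R] B) (g : B →ₗ[R] C) : Prop :=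
  Function.Injective f ∧ Function.Surjective g ∧ Function.Exact f g

/-- Gorenstein dimension at most `n`: there is a resolution of length `≤ n`
by totally reflexive modules. -/
def GdimLE : ℕ → ModuleCat.{u} R → Prop
  | 0, M => IsTotallyReflexive R M
  | n + 1, M => ∃ (X K : ModuleCat.{u} R) (f : K →ₗ[R] X) (g : X →ₗ[R] M),
      IsTotallyReflexive R X ∧ IsShortExact R f g ∧ GdimLE n K

/-- Projective dimension at most `n`. -/
def PdimLE : ℕ → ModuleCat.{u} R → Prop
  | 0, M => Module.Finite R M ∧ Module.Projective R M
  | n + 1, M => ∃ (X K : ModuleCat.{u} R) (f : K →ₗ[R] X) (g : X →ₗ[R] M),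
      Module.Finite R X ∧ Module.Projective R X ∧ IsShortExact R f g ∧ PdimLE n K

/-- Injective dimension at most `n`. -/
def InjdimLE : ℕ → ModuleCat.{u} R → Prop
  | 0, M => Module.Injective R M
  | n + 1, M => ∃ (I C : ModuleCat.{u} R) (f : M →ₗ[R] I) (g : I →ₗ[R] C),
      Module.Injective R I ∧ IsShortExact R f g ∧ InjdimLE n C

/-- The Gorenstein dimension, as an element of `ℕ∞`. -/
noncomputable def Gdim (M : ModuleCat.{u} R) : ℕ∞ :=
  sInf {n : ℕ∞ | ∃ m : ℕ, n = (m : ℕ∞) ∧ GdimLE R m M}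

/-- The projective dimension, as an element of `ℕ∞`. -/
noncomputable def Pdim (M : ModuleCat.{u} R) : ℕ∞ :=
  sInf {n : ℕ∞ | ∃ m : ℕ, n = (m : ℕ∞) ∧ PdimLE R m M}

/-- A local ring is Gorenstein if it has finite injective dimension over itself. -/
def IsGorensteinRing : Prop :=
  ∃ n : ℕ, InjdimLE R n (ModuleCat.of R R)

/-- `IsSyzygy R n S K` : `S` is an `n`-th syzygy of `K`, i.e. there is an exact sequence
`0 → S → F_{n-1} → ⋯ → F_0 → K → 0` with each `F_j` finitely generated free. -/
def IsSyzygy : ℕ → ModuleCat.{u} R → ModuleCat.{u} R → Prop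
  | 0, S, K => Nonempty (S ≃ₗ[R] K)
  | n + 1, S, K => ∃ (W F : ModuleCat.{u} R) (f : W →ₗ[R] F) (g : F →ₗ[R] K),
      Module.Free R F ∧ Module.Finite R F ∧ IsShortExact R f g ∧ IsSyzygy n S W

/-- One step in a reducing sequence: a short exact sequence
`0 → K^{⊕a} → L → (Ω^n K)^{⊕b} → 0`. -/
def ReducingStep (K L : ModuleCat.{u} R) (a b n : ℕ) : Prop :=
  ∃ (W : ModuleCat.{u} R) (f : (Fin a → K) →ₗ[R] L) (g : L →ₗ[R] (Fin b → W)),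
    IsSyzygy R n W K ∧ IsShortExact R f g

/-- `M` admits a reducing sequence `K_0 = M, K_1, …, K_r` relative to the property `P`,
that is, short exact sequences `0 → K_{i-1}^{⊕a_i} → K_i → (Ω^{n_i}K_{i-1})^{⊕b_i} → 0`
with `a_i, b_i, n_i ≥ 1` and `P (K_r)`. -/
def HasReducingSeq (P : ModuleCat.{u} R → Prop) (M : ModuleCat.{u} R) (r : ℕ) : Prop :=
  ∃ (K : Fin (r + 1) → ModuleCat.{u} R) (a b n : Fin r → ℕ),
    K 0 = M ∧ (∀ i, Module.Finite R (K i)) ∧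
    (∀ i : Fin r, 1 ≤ a i ∧ 1 ≤ b i ∧ 1 ≤ n i ∧
      ReducingStep R (K i.castSucc) (K i.succ) (a i) (b i) (n i)) ∧
    P (K (Fin.last r))

/-- The reducing invariant attached to the finiteness property `P`. -/
noncomputable def ReducingDim (P : ModuleCat.{u} R → Prop) (M : ModuleCat.{u} R) : ℕ∞ :=
  sInf {n : ℕ∞ | ∃ r : ℕ, n = (r : ℕ∞) ∧ HasReducingSeq R P M r}

/-- The reducing Gorenstein dimension. -/
noncomputable def rGdim (M : ModuleCat.{u} R) : ℕ∞ :=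
  ReducingDim R (fun N => ∃ m : ℕ, GdimLE R m N) M

/-- The reducing projective dimension. -/
noncomputable def rPdim (M : ModuleCat.{u} R) : ℕ∞ :=
  ReducingDim R (fun N => ∃ m : ℕ, PdimLE R m N) M

/-- depth of a module over a local ring: `inf { i | Ext^i(k, M) ≠ 0 }`. -/
noncomputable def depth [IsLocalRing R] (M : ModuleCat.{u} R) : ℕ∞ :=
  sInf {n : ℕ∞ | ∃ i : ℕ, n = (i : ℕ∞) ∧
    ¬ ExtVanish R (R ⧸ IsLocalRing.maximalIdeal R) M i}

/-- maximal Cohen-Macaulay: depth equals the Krull dimension of the ring. -/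
def IsMCM [IsLocalRing R] (M : ModuleCat.{u} R) : Prop :=
  (depth R M : WithBot ℕ∞) = ringKrullDim R

/-- torsion-free: every non zero-divisor of `R` is a non zero-divisor on `M`. -/
def IsTorsionFreeModule (M : Type u) [AddCommGroup M] [Module R M] : Prop :=
  ∀ r ∈ nonZeroDivisors R, ∀ m : M, r • m = 0 → m = 0

/-
Let `M ≠ 0` have finite injective dimension and finite Gorenstein dimension. Pushouts along a
resolution by totally reflexive modules embed `M` into a module of finite projective dimension with
totally reflexive cokernel `Y`. Since `Y` is a syzygy of arbitrarily high order and `M` has finite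
injective dimension, `Ext¹(Y, M) = 0`, so the embedding splits and `M` has finite projective
dimension.

Now let `I` be an injective resolution of `R`. Replacing the free modules in a minimal free
resolution of `M` by copies of `I` and taking iterated mapping cones gives a complex `C` of
injective modules which computes `M`. As `M` has finite injective dimension, `C` splits in high
degrees, so there every cocycle in the socle of `C` is the differential of an element of the socle.
The matrices of a minimal resolution have entries in the maximal ideal and hence vanish on socles;
so the same holds for `I`, that is, `Extⁿ(k, R) = 0` for large `n`. By Nakayama's lemma and prime
filtrations `Extⁿ(R/a, R) = 0` for every ideal `a`, and Baer's criterion bounds the injective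
dimension of `R`.
-/

section ExtOfModules

variable {R} {A B C X Y : Type u} [AddCommGroup A] [Module R A]
  [AddCommGroup B] [Module R B] [AddCommGroup C] [Module R C] [AddCommGroup X] [Module R X]
  [AddCommGroup Y] [Module R Y] {f : A →ₗ[R] B} {g : B →ₗ[R] C}

variable (R) in
/-- `Ext^n_R(X, Y)` of unbundled modules, as a group of morphisms in the derived category; it
carries long exact sequences which the derived functor in `ExtVanish` does not have. -/
abbrev ModuleExt (X Y : Type u) [AddCommGroup X] [Module R X] [AddCommGroup Y] [Module R Y]
    (n : ℕ) : Type u :=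
  Abelian.Ext.{u} (ModuleCat.of R X) (ModuleCat.of R Y) n

theorem extVanish_succ_iff (n : ℕ) :
    ExtVanish R X Y (n + 1) ↔ Subsingleton (ModuleExt R X Y (n + 1)) := by
  let P := projectiveResolution (ModuleCat.of R X)
  have cocycles_bound : ExtVanish R X Y (n + 1) ↔
      ∀ f : P.complex.X (n + 1) ⟶ ModuleCat.of R Y, P.complex.d (n + 2) (n + 1) ≫ f = 0 →
        ∃ g : P.complex.X n ⟶ ModuleCat.of R Y, P.complex.d (n + 1) n ≫ g = f := by
    rw [ExtVanish, ← ModuleCat.isZero_iff_subsingleton,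
      (P.isoExt (R := R) (n + 1) (ModuleCat.of R Y)).isZero_iff,
      ← HomologicalComplex.exactAt_iff_isZero_homology,
      HomologicalComplex.exactAt_iff' _ n (n + 1) (n + 2) (by simp) (by simp),
      ShortComplex.moduleCat_exact_iff]
    rfl
  rw [cocycles_bound]
  refine ⟨fun h => subsingleton_of_forall_eq 0 fun α => ?_, fun h f hf => ?_⟩
  · obtain ⟨f, hf, rfl⟩ := P.extMk_surjective α (n + 2) rfl
    exact (P.extMk_eq_zero_iff _ _ _ _ n rfl).2 (h f hf)
  · exact (P.extMk_eq_zero_iff f (n + 2) rfl hf n rfl).1 (Subsingleton.elim _ _)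

namespace IsShortExact

theorem shortExact (h : IsShortExact R f g) :
    (ShortComplex.mk (ModuleCat.ofHom f) (ModuleCat.ofHom g)
      (ModuleCat.hom_ext h.2.2.linearMap_comp_eq_zero)).ShortExact :=
  ModuleCat.shortComplex_shortExact _ h.2.2 h.1 h.2.1

theorem of_surjective (hg : Function.Surjective g) : IsShortExact R (LinearMap.ker g).subtype g :=
  ⟨Submodule.injective_subtype _, hg, LinearMap.exact_subtype_ker_map g⟩

theorem of_injective (hf : Function.Injective f) : IsShortExact R f (LinearMap.range f).mkQ :=
  ⟨hf, Submodule.mkQ_surjective _, LinearMap.exact_map_mkQ_range f⟩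

theorem subsingleton_ext_middle (h : IsShortExact R f g) {n : ℕ}
    (hA : Subsingleton (ModuleExt R A Y n)) (hC : Subsingleton (ModuleExt R C Y n)) :
    Subsingleton (ModuleExt R B Y n) := by
  refine subsingleton_of_forall_eq 0 fun α => ?_
  obtain ⟨β, rfl⟩ := Abelian.Ext.contravariant_sequence_exact₂ h.shortExact _ α
    (Subsingleton.elim _ _)
  rw [Subsingleton.elim β 0, Abelian.Ext.comp_zero]

theorem subsingleton_ext_left (h : IsShortExact R f g) {n : ℕ}
    (hB : Subsingleton (ModuleExt R B Y n)) (hC : Subsingleton (ModuleExt R C Y (n + 1))) :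
    Subsingleton (ModuleExt R A Y n) := by
  refine subsingleton_of_forall_eq 0 fun α => ?_
  obtain ⟨β, rfl⟩ := Abelian.Ext.contravariant_sequence_exact₁ h.shortExact _ α (add_comm 1 n)
    (Subsingleton.elim _ _)
  rw [Subsingleton.elim β 0, Abelian.Ext.comp_zero]

theorem subsingleton_ext_right (h : IsShortExact R f g) {n : ℕ}
    (hA : Subsingleton (ModuleExt R A Y n)) (hB : Subsingleton (ModuleExt R B Y (n + 1))) :
    Subsingleton (ModuleExt R C Y (n + 1)) := by
  refine subsingleton_of_forall_eq 0 fun α => ?_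
  obtain ⟨β, rfl⟩ := Abelian.Ext.contravariant_sequence_exact₃ h.shortExact _ α
    (Subsingleton.elim _ _) (add_comm 1 n)
  rw [Subsingleton.elim β 0, Abelian.Ext.comp_zero]

theorem exists_extend (h : IsShortExact R f g) (hC : Subsingleton (ModuleExt R C Y 1))
    (φ : A →ₗ[R] Y) : ∃ ψ : B →ₗ[R] Y, ψ ∘ₗ f = φ := by
  obtain ⟨α, hα⟩ := Abelian.Ext.contravariant_sequence_exact₁ h.shortExact (ModuleCat.of R Y)
    (Abelian.Ext.mk₀ (ModuleCat.ofHom φ)) (n₁ := 1) rfl (Subsingleton.elim _ _)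
  obtain ⟨ψ, rfl⟩ := Abelian.Ext.homEquiv₀.symm.surjective α
  rw [Abelian.Ext.homEquiv₀_symm_apply, Abelian.Ext.mk₀_comp_mk₀] at hα
  exact ⟨ψ.hom, congrArg ModuleCat.Hom.hom (Abelian.Ext.homEquiv₀.symm.injective hα)⟩

theorem subsingleton_ext_one_of_extend (h : IsShortExact R f g)
    (hB : Subsingleton (ModuleExt R B Y 1))
    (extend : ∀ φ : A →ₗ[R] Y, ∃ ψ : B →ₗ[R] Y, ψ ∘ₗ f = φ) :
    Subsingleton (ModuleExt R C Y 1) := by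
  refine subsingleton_of_forall_eq 0 fun α => ?_
  obtain ⟨β, rfl⟩ := Abelian.Ext.contravariant_sequence_exact₃ h.shortExact _ α
    (Subsingleton.elim _ _) (n₀ := 0) rfl
  obtain ⟨φ, rfl⟩ := Abelian.Ext.homEquiv₀.symm.surjective β
  obtain ⟨ψ, hψ⟩ := extend φ.hom
  obtain rfl : ModuleCat.ofHom f ≫ ModuleCat.ofHom ψ = φ := ModuleCat.hom_ext hψ
  rw [Abelian.Ext.homEquiv₀_symm_apply, ← Abelian.Ext.mk₀_comp_mk₀]
  exact h.shortExact.extClass_comp_assoc _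

theorem exists_factor (h : IsShortExact R f g) (φ : B →ₗ[R] Y) (hφ : φ ∘ₗ f = 0) :
    ∃ ψ : C →ₗ[R] Y, ψ ∘ₗ g = φ :=
  (LinearMap.exact_lcomp_of_exact_of_surjective Y h.2.2 h.2.1 φ).1 hφ

theorem comp_eq_zero (h : IsShortExact R f g) : g ∘ₗ f = 0 :=
  h.2.2.linearMap_comp_eq_zero

theorem dual (h : IsShortExact R f g) (hC : Subsingleton (ModuleExt R C R 1)) :
    IsShortExact R g.dualMap f.dualMap :=
  ⟨LinearMap.dualMap_injective_of_surjective h.2.1, h.exists_extend hC,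
    LinearMap.exact_lcomp_of_exact_of_surjective R h.2.2 h.2.1⟩

theorem bijective_middle {A' B' C' : Type u} [AddCommGroup A'] [Module R A'] [AddCommGroup B']
    [Module R B'] [AddCommGroup C'] [Module R C'] {f' : A' →ₗ[R] B'} {g' : B' →ₗ[R] C'}
    (h : IsShortExact R f g) (h' : IsShortExact R f' g') {a : A →ₗ[R] A'} {b : B →ₗ[R] B'}
    {c : C →ₗ[R] C'} (hf : f' ∘ₗ a = b ∘ₗ f) (hg : g' ∘ₗ b = c ∘ₗ g)
    (ha : Function.Bijective a) (hc : Function.Bijective c) : Function.Bijective b := by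
  have left_exact {M N : Type u} [AddCommGroup M] [Module R M] [AddCommGroup N] [Module R N]
      {u : M →ₗ[R] N} (hu : Function.Injective u) : Function.Exact (0 : Unit →ₗ[R] M) u :=
    (LinearMap.exact_zero_iff_injective Unit u).2 hu
  have right_exact {M N : Type u} [AddCommGroup M] [Module R M] [AddCommGroup N] [Module R N]
      {u : M →ₗ[R] N} (hu : Function.Surjective u) : Function.Exact u (0 : N →ₗ[R] Unit) :=
    (LinearMap.exact_zero_iff_surjective Unit u).2 hu
  exact LinearMap.bijective_of_surjective_of_bijective_of_bijective_of_injective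
    (0 : Unit →ₗ[R] A) f g (0 : C →ₗ[R] Unit) (0 : Unit →ₗ[R] A') f' g' (0 : C' →ₗ[R] Unit)
    0 a b c 0 (by simp) hf hg (by simp) (left_exact h.1) h.2.2 (right_exact h.2.1)
    (left_exact h'.1) h'.2.2 (right_exact h'.2.1) (fun x => ⟨x, rfl⟩) ha hc
    (Function.injective_of_subsingleton _)

end IsShortExact

/-- The square with maps `f : A → B`, `g : A → C`, `i : B → W`, `j : C → W` is a pushout of modules
up to the sign of one of its maps; leaving out the sign makes the notion symmetric. -/
structure IsSignedPushout {W : Type u} [AddCommGroup W] [Module R W] (f : A →ₗ[R] B) (g : A →ₗ[R] C)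
    (i : B →ₗ[R] W) (j : C →ₗ[R] W) : Prop where
  exact : Function.Exact (f.prod g) (i.coprod j)
  surjective : Function.Surjective (i.coprod j)

namespace IsSignedPushout

theorem exists_of_span (f : A →ₗ[R] B) (g : A →ₗ[R] C) :
    ∃ (W : ModuleCat.{u} R) (i : B →ₗ[R] W) (j : C →ₗ[R] W), IsSignedPushout f g i j := by
  let q := (LinearMap.range (f.prod g)).mkQ
  have hq : (q ∘ₗ LinearMap.inl R B C).coprod (q ∘ₗ LinearMap.inr R B C) = q := by
    rw [← LinearMap.comp_coprod, LinearMap.coprod_inl_inr, LinearMap.comp_id]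
  refine ⟨ModuleCat.of R _, q ∘ₗ LinearMap.inl R B C, q ∘ₗ LinearMap.inr R B C, ?_, ?_⟩
  · rw [hq]
    exact LinearMap.exact_map_mkQ_range _
  · rw [hq]
    exact Submodule.mkQ_surjective _

variable {P W : Type u} [AddCommGroup P] [Module R P] [AddCommGroup W] [Module R W]

theorem symm {h : A →ₗ[R] P} {i : B →ₗ[R] W} {j : P →ₗ[R] W} (sq : IsSignedPushout f h i j) :
    IsSignedPushout h f j i where
  exact x := by simpa [add_comm, and_comm, Prod.ext_iff] using sq.exact x.swap
  surjective w := by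
    obtain ⟨x, rfl⟩ := sq.surjective w
    exact ⟨x.swap, add_comm _ _⟩

theorem apply_right {h : A →ₗ[R] P} {i : B →ₗ[R] W} {j : P →ₗ[R] W} (sq : IsSignedPushout f h i j)
    (a : A) : j (h a) = -i (f a) :=
  eq_neg_of_add_eq_zero_right (sq.exact.apply_apply_eq_zero a)

theorem exists_isShortExact {h : A →ₗ[R] P} {i : B →ₗ[R] W} {j : P →ₗ[R] W}
    (sq : IsSignedPushout f h i j) (hfg : IsShortExact R f g) :
    ∃ b : W →ₗ[R] C, IsShortExact R j b := by
  obtain ⟨b, hb⟩ := (IsShortExact.of_surjective sq.surjective).exists_factor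
    (g ∘ₗ LinearMap.fst R B P) (by
      ext ⟨x, hx⟩
      obtain ⟨a, rfl⟩ := (sq.exact x).1 hx
      exact hfg.2.2.apply_apply_eq_zero a)
  have hb' (x : B × P) : b (i x.1 + j x.2) = g x.1 := LinearMap.congr_fun hb x
  refine ⟨b, (injective_iff_map_eq_zero j).2 fun p hp => ?_, fun c => ?_,
    fun w => ⟨fun hw => ?_, ?_⟩⟩
  · obtain ⟨a, ha⟩ := (sq.exact (0, p)).1 (by simpa using hp)
    obtain ⟨ha₀, rfl⟩ := Prod.mk.inj ha
    rw [(map_eq_zero_iff f hfg.1).1 ha₀, map_zero]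
  · obtain ⟨y, rfl⟩ := hfg.2.1 c
    exact ⟨i y, by simpa using hb' (y, 0)⟩
  · obtain ⟨⟨y, p⟩, rfl⟩ := sq.surjective w
    obtain ⟨a, rfl⟩ := (hfg.2.2 y).1 ((hb' (y, p)).symm.trans hw)
    exact ⟨p - h a, by simp [sq.apply_right, add_comm]⟩
  · rintro ⟨p, rfl⟩
    simpa using hb' (0, p)

theorem isShortExact_comp {h : B →ₗ[R] P} {i : C →ₗ[R] W} {j : P →ₗ[R] W}
    (sq : IsSignedPushout g h i j) (hfg : IsShortExact R f g) (hh : Function.Injective h) :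
    IsShortExact R (h ∘ₗ f) j := by
  refine ⟨hh.comp hfg.1, fun w => ?_, fun p => ⟨fun hp => ?_, ?_⟩⟩
  · obtain ⟨⟨c, p⟩, rfl⟩ := sq.surjective w
    obtain ⟨y, rfl⟩ := hfg.2.1 c
    exact ⟨p - h y, by simp [sq.apply_right, add_comm]⟩
  · obtain ⟨y, hy⟩ := (sq.exact (0, p)).1 (by simpa using hp)
    obtain ⟨hy₀, rfl⟩ := Prod.mk.inj hy
    obtain ⟨a, rfl⟩ := (hfg.2.2 y).1 hy₀
    exact ⟨a, rfl⟩
  · rintro ⟨a, rfl⟩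
    simp [sq.apply_right, hfg.2.2.apply_apply_eq_zero a]

end IsSignedPushout

end ExtOfModules

section TotallyReflexive

variable {R}

theorem isTotallyReflexive_iff {X : Type u} [AddCommGroup X] [Module R X] :
    IsTotallyReflexive R X ↔ Module.Finite R X ∧ Function.Bijective (Module.Dual.eval R X) ∧
      (∀ i, Subsingleton (ModuleExt R X R (i + 1))) ∧
      ∀ i, Subsingleton (ModuleExt R (Module.Dual R X) R (i + 1)) := by
  have shift (Y : Type u) [AddCommGroup Y] [Module R Y] : (∀ i, 1 ≤ i → ExtVanish R Y R i) ↔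
      ∀ i, Subsingleton (ModuleExt R Y R (i + 1)) :=
    ⟨fun h i => (extVanish_succ_iff i).1 (h (i + 1) (by lia)), fun h i hi => by
      obtain ⟨j, rfl⟩ := Nat.exists_eq_add_of_le' hi
      exact (extVanish_succ_iff j).2 (h j)⟩
  rw [IsTotallyReflexive, shift, shift]

theorem subsingleton_ext_of_projective (F Y : Type u) [AddCommGroup F] [Module R F]
    [Module.Projective R F] [AddCommGroup Y] [Module R Y] (n : ℕ) :
    Subsingleton (ModuleExt R F Y (n + 1)) :=
  have : Projective (ModuleCat.of R F) := (IsProjective.iff_projective F).1 inferInstance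
  Abelian.Ext.subsingleton_of_projective _ _ _

theorem subsingleton_ext_of_linearEquiv {A B Y : Type u} [AddCommGroup A] [Module R A]
    [AddCommGroup B] [Module R B] [AddCommGroup Y] [Module R Y] (e : A ≃ₗ[R] B) {n : ℕ}
    (h : Subsingleton (ModuleExt R A Y n)) : Subsingleton (ModuleExt R B Y n) := by
  refine subsingleton_of_forall_eq 0 fun α => ?_
  rw [← Abelian.Ext.mk₀_id_comp α, ← e.toModuleIso.inv_hom_id, ← Abelian.Ext.mk₀_comp_mk₀,
    Abelian.Ext.comp_assoc_of_second_deg_zero, Subsingleton.elim (Abelian.Ext.comp _ α _) 0,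
    Abelian.Ext.comp_zero]

namespace IsTotallyReflexive

variable {A B C X Y : Type u} [AddCommGroup A] [Module R A] [AddCommGroup B] [Module R B]
  [AddCommGroup C] [Module R C] [AddCommGroup X] [Module R X] {f : A →ₗ[R] B} {g : B →ₗ[R] C}

theorem finite (h : IsTotallyReflexive R X) : Module.Finite R X := h.1

theorem bijective_eval (h : IsTotallyReflexive R X) : Function.Bijective (Module.Dual.eval R X) :=
  h.2.1

theorem subsingleton_ext (h : IsTotallyReflexive R X) (i : ℕ) :
    Subsingleton (ModuleExt R X R (i + 1)) :=
  (isTotallyReflexive_iff.1 h).2.2.1 i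

theorem subsingleton_ext_dual (h : IsTotallyReflexive R X) (i : ℕ) :
    Subsingleton (ModuleExt R (Module.Dual R X) R (i + 1)) :=
  (isTotallyReflexive_iff.1 h).2.2.2 i

theorem of_free [Module.Free R X] [Module.Finite R X] : IsTotallyReflexive R X :=
  isTotallyReflexive_iff.2 ⟨inferInstance, Module.bijective_dual_eval R X,
    subsingleton_ext_of_projective X R, subsingleton_ext_of_projective (Module.Dual R X) R⟩

theorem dual [IsNoetherianRing R] (h : IsTotallyReflexive R X) :
    IsTotallyReflexive R (Module.Dual R X) := by
  have := h.finite
  have : Module.IsReflexive R X := ⟨h.bijective_eval⟩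
  exact isTotallyReflexive_iff.2 ⟨inferInstance, Module.bijective_dual_eval R _,
    h.subsingleton_ext_dual, fun i =>
      subsingleton_ext_of_linearEquiv (Module.evalEquiv R X) (h.subsingleton_ext i)⟩

theorem middle (h : IsShortExact R f g) (hA : IsTotallyReflexive R A)
    (hC : IsTotallyReflexive R C) : IsTotallyReflexive R B := by
  have hdual : IsShortExact R g.dualMap f.dualMap := h.dual (hC.subsingleton_ext 0)
  have hbidual : IsShortExact R f.dualMap.dualMap g.dualMap.dualMap :=
    hdual.dual (hA.subsingleton_ext_dual 0)
  have := hA.finite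
  have := hC.finite
  exact isTotallyReflexive_iff.2 ⟨Module.Finite.of_exact h.2.2 h.2.1,
    h.bijective_middle hbidual rfl rfl hA.bijective_eval hC.bijective_eval,
    fun i => h.subsingleton_ext_middle (hA.subsingleton_ext i) (hC.subsingleton_ext i),
    fun i => hdual.subsingleton_ext_middle (hC.subsingleton_ext_dual i)
      (hA.subsingleton_ext_dual i)⟩

theorem left [IsNoetherianRing R] (h : IsShortExact R f g) (hB : IsTotallyReflexive R B)
    (hC : IsTotallyReflexive R C) : IsTotallyReflexive R A := by
  have hdual : IsShortExact R g.dualMap f.dualMap := h.dual (hC.subsingleton_ext 0)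
  have := hB.finite
  have extend (φ : Module.Dual R (Module.Dual R C)) :
      ∃ ψ : Module.Dual R (Module.Dual R B), ψ ∘ₗ g.dualMap = φ := by
    obtain ⟨c, rfl⟩ := hC.bijective_eval.2 φ
    obtain ⟨b, rfl⟩ := h.2.1 c
    exact ⟨Module.Dual.eval R B b, rfl⟩
  have ext_dual : ∀ i, Subsingleton (ModuleExt R (Module.Dual R A) R (i + 1))
    | 0 => hdual.subsingleton_ext_one_of_extend (hB.subsingleton_ext_dual 0) extend
    | i + 1 => hdual.subsingleton_ext_right (hC.subsingleton_ext_dual i)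
        (hB.subsingleton_ext_dual (i + 1))
  have hbidual : IsShortExact R f.dualMap.dualMap g.dualMap.dualMap := hdual.dual (ext_dual 0)
  exact isTotallyReflexive_iff.2 ⟨Module.Finite.of_injective f h.1,
    LinearMap.bijective_of_bijective_of_injective_of_left_exact f g _ _
      (Module.Dual.eval R A) (Module.Dual.eval R B) (Module.Dual.eval R C) rfl rfl h.2.2
      hbidual.2.2 hB.bijective_eval hC.bijective_eval.1 h.1 hbidual.1,
    fun i => h.subsingleton_ext_left (hB.subsingleton_ext i) (hC.subsingleton_ext (i + 1)),
    ext_dual⟩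

theorem exists_embedding [IsNoetherianRing R] (h : IsTotallyReflexive R X) :
    ∃ (F X' : ModuleCat.{u} R) (f : X →ₗ[R] F) (g : F →ₗ[R] X'), Module.Free R F ∧
      Module.Finite R F ∧ IsShortExact R f g ∧ IsTotallyReflexive R X' := by
  have := h.finite
  obtain ⟨n, p, hp⟩ := Module.Finite.exists_fin' R (Module.Dual R X)
  have hcover := IsShortExact.of_surjective hp
  have hK : IsTotallyReflexive R (LinearMap.ker p) := left hcover of_free h.dual
  have hdual := hcover.dual (h.subsingleton_ext_dual 0)
  have : Module.IsReflexive R X := ⟨h.bijective_eval⟩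
  let e := Module.evalEquiv R X
  exact ⟨ModuleCat.of R (Module.Dual R (Fin n → R)), ModuleCat.of R (Module.Dual R p.ker),
    p.dualMap ∘ₗ e.toLinearMap, p.ker.subtype.dualMap,
    inferInstanceAs (Module.Free R (Module.Dual R (Fin n → R))),
    inferInstanceAs (Module.Finite R (Module.Dual R (Fin n → R))),
    ⟨hdual.1.comp e.injective, hdual.2.1, LinearEquiv.precomp_exact_iff_exact.2 hdual.2.2⟩, hK.dual⟩

end IsTotallyReflexive

end TotallyReflexive

section HomologicalDimensions

variable {R}

theorem injdimLE_iff_hasInjectiveDimensionLT (n : ℕ) (M : ModuleCat.{u} R) :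
    InjdimLE R n M ↔ HasInjectiveDimensionLT M (n + 1) := by
  induction n generalizing M with
  | zero =>
    rw [InjdimLE, Module.injective_iff_injective_object,
      ← injective_iff_hasInjectiveDimensionLT_one]
  | succ n ih =>
    have shift (I C : ModuleCat.{u} R) (f : M →ₗ[R] I) (g : I →ₗ[R] C) (hI : Module.Injective R I)
        (h : IsShortExact R f g) :
        HasInjectiveDimensionLT C (n + 1) ↔ HasInjectiveDimensionLT M (n + 2) :=
      h.shortExact.hasInjectiveDimensionLT_X₃_iff n
        (Module.injective_object_of_injective_module R I)
    constructor
    · rintro ⟨I, C, f, g, hI, h, hC⟩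
      exact (shift I C f g hI h).1 ((ih C).1 hC)
    · intro hM
      let I : ModuleCat.{u} R := Injective.under M
      have hI : Module.Injective R I :=
        (Module.injective_iff_injective_object R I).2 (Injective.injective_under M)
      have h := IsShortExact.of_injective
        ((ModuleCat.mono_iff_injective (Injective.ι M)).1 inferInstance)
      exact ⟨I, ModuleCat.of R _, (Injective.ι M).hom, _, hI, h,
        (ih _).2 ((shift I (ModuleCat.of R _) _ _ hI h).2 hM)⟩

theorem GdimLE.exists_approximation [IsNoetherianRing R] (n : ℕ) (M : ModuleCat.{u} R)
    (h : GdimLE R n M) :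
    ∃ (P Y : ModuleCat.{u} R) (f : M →ₗ[R] P) (g : P →ₗ[R] Y),
      IsShortExact R f g ∧ HasProjectiveDimensionLT P (n + 1) ∧ IsTotallyReflexive R Y := by
  induction n generalizing M with
  | zero =>
    obtain ⟨F, Y, f, g, _, _, hfg, hY⟩ := IsTotallyReflexive.exists_embedding h
    exact ⟨F, Y, f, g, hfg, inferInstance, hY⟩
  | succ n ih =>
    obtain ⟨X, K, κ, p, hX, hKX, hK⟩ := h
    obtain ⟨P, Y, f, g, hKP, hP, hY⟩ := ih K hK
    obtain ⟨W, i, j, sq⟩ := IsSignedPushout.exists_of_span f κ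
    obtain ⟨a, hXW⟩ := sq.exists_isShortExact hKP
    obtain ⟨b, hPW⟩ := sq.symm.exists_isShortExact hKX
    obtain ⟨F, Z, c, d, _, _, hWF, hZ⟩ := (IsTotallyReflexive.middle hXW hX hY).exists_embedding
    obtain ⟨Q, k, l, sq'⟩ := IsSignedPushout.exists_of_span c b
    obtain ⟨z, hMQ⟩ := sq'.exists_isShortExact hWF
    have hPQ := sq'.symm.isShortExact_comp hPW hWF.1
    have hF : Projective (ModuleCat.of R F) := (IsProjective.iff_projective F).1 .of_free
    exact ⟨Q, Z, l, z, hMQ, (hPQ.shortExact.hasProjectiveDimensionLT_X₃_iff n hF).2 hP, hZ⟩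

theorem IsTotallyReflexive.subsingleton_ext_of_hasInjectiveDimensionLT [IsNoetherianRing R]
    {Y N : Type u} [AddCommGroup Y] [Module R Y] [AddCommGroup N] [Module R N]
    (hY : IsTotallyReflexive R Y) (m : ℕ) [HasInjectiveDimensionLT (ModuleCat.of R N) m] (i : ℕ) :
    Subsingleton (ModuleExt R Y N (i + 1)) := by
  induction hm : m - (i + 1) generalizing Y i with
  | zero => exact HasInjectiveDimensionLT.subsingleton _ m _ (by lia) _
  | succ k ih =>
    obtain ⟨F, Y', f, g, _, _, hfg, hY'⟩ := hY.exists_embedding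
    exact hfg.subsingleton_ext_left (subsingleton_ext_of_projective F N i) (ih hY' (i + 1) (by lia))

theorem hasProjectiveDimensionLT_of_gdimLE_of_hasInjectiveDimensionLT [IsNoetherianRing R] {m n : ℕ}
    {M : ModuleCat.{u} R} (hG : GdimLE R n M) (hI : HasInjectiveDimensionLT M m) :
    HasProjectiveDimensionLT M (n + 1) := by
  obtain ⟨P, Y, f, g, hfg, hP, hY⟩ := hG.exists_approximation
  obtain ⟨r, hr⟩ := hfg.exists_extend (hY.subsingleton_ext_of_hasInjectiveDimensionLT m 0) .id
  let retract : Retract M P := ⟨ModuleCat.ofHom f, ModuleCat.ofHom r, ModuleCat.hom_ext hr⟩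
  exact retract.hasProjectiveDimensionLT (n + 1)

end HomologicalDimensions

section MinimalCover

open IsLocalRing TensorProduct

variable {R} [IsLocalRing R] {M : Type u} [AddCommGroup M] [Module R M]

/-- A finite free cover `p` of a module over a local ring is minimal if its kernel has coordinates
in the maximal ideal, i.e. if `p` maps the standard basis to a minimal system of generators. -/
structure IsMinimalCover {r : ℕ} (p : (Fin r → R) →ₗ[R] M) : Prop where
  surjective : Function.Surjective p
  mem_maximalIdeal : ∀ x, p x = 0 → ∀ i, x i ∈ maximalIdeal R

namespace IsMinimalCover

variable (R M) in
theorem exists_of_finite [Module.Finite R M] :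
    ∃ (r : ℕ) (p : (Fin r → R) →ₗ[R] M), IsMinimalCover p := by
  let b := Module.finBasis (ResidueField R) (ResidueField R ⊗[R] M)
  obtain ⟨v, hv⟩ := (mk_surjective R M (ResidueField R) residue_surjective).comp_left b
  have one_tmul (i) : 1 ⊗ₜ[R] v i = b i := congrFun hv i
  refine ⟨_, Fintype.linearCombination R v, ?_, fun x hx i => ?_⟩
  · rw [← LinearMap.range_eq_top, Fintype.range_linearCombination]
    exact span_eq_top_of_tmul_eq_basis v b one_tmul
  · have relation : ∑ j, residue R (x j) • b j = 0 := by
      have := congrArg ((1 : ResidueField R) ⊗ₜ[R] ·) hx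
      simpa only [Fintype.linearCombination_apply, tmul_sum, tmul_smul, one_tmul, tmul_zero,
        ← algebraMap_smul (ResidueField R) (x _), ResidueField.algebraMap_eq] using this
    rw [← residue_eq_zero_iff]
    exact Fintype.linearIndependent_iff.1 b.linearIndependent _ relation i

variable {r : ℕ} {p : (Fin r → R) →ₗ[R] M}

theorem ker_eq_bot [IsNoetherianRing R] [Module.Projective R M] (hp : IsMinimalCover p) :
    LinearMap.ker p = ⊥ := by
  obtain ⟨s, hs⟩ := Module.projective_lifting_property p .id hp.surjective
  have ker_le : LinearMap.ker p ≤ maximalIdeal R • LinearMap.ker p := fun x hx => by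
    let q := LinearMap.id - s ∘ₗ p
    have hq (y) : q y ∈ LinearMap.ker p := by
      simpa [q, sub_eq_zero] using (LinearMap.congr_fun hs (p y)).symm
    have hx_sum : x = ∑ i, x i • q (fun j => if i = j then 1 else 0) := by
      rw [← q.pi_apply_eq_sum_univ]
      simp [q, LinearMap.mem_ker.1 hx]
    rw [hx_sum]
    exact Submodule.sum_mem _ fun i _ =>
      Submodule.smul_mem_smul (hp.mem_maximalIdeal x hx i) (hq _)
  exact Submodule.eq_bot_of_le_smul_of_le_jacobson_bot _ _ (IsNoetherian.noetherian _) ker_le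
    (maximalIdeal_le_jacobson _)

theorem hasProjectiveDimensionLT_ker [IsNoetherianRing R] (hp : IsMinimalCover p) {n : ℕ}
    (hM : HasProjectiveDimensionLT (ModuleCat.of R M) (n + 1)) :
    HasProjectiveDimensionLT (ModuleCat.of R (LinearMap.ker p)) n := by
  cases n with
  | zero =>
    have : Module.Projective R M := (IsProjective.iff_projective M).2
      (projective_iff_hasProjectiveDimensionLT_one.2 hM)
    rw [hasProjectiveDimensionLT_zero_iff_isZero, ModuleCat.isZero_iff_subsingleton]
    exact Submodule.subsingleton_iff_eq_bot.2 hp.ker_eq_bot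
  | succ n =>
    have : Projective (ModuleCat.of R (Fin r → R)) := (IsProjective.iff_projective _).1 .of_free
    exact ((IsShortExact.of_surjective hp.surjective).shortExact.hasProjectiveDimensionLT_X₃_iff n
      this).1 hM

end IsMinimalCover

end MinimalCover

section InjectiveComplexes

/-- A cochain complex of injective modules which is exact in positive degrees. -/
structure InjectiveComplex where
  X : ℕ → ModuleCat.{u} R
  d (n : ℕ) : X n →ₗ[R] X (n + 1)
  injective (n : ℕ) : Module.Injective R (X n)
  exact (n : ℕ) : Function.Exact (d n) (d (n + 1))

/-- An injective coresolution of the module `N`. -/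
structure InjectiveCoresolution (N : Type u) [AddCommGroup N] [Module R N]
    extends InjectiveComplex R where
  ι : N →ₗ[R] X 0
  ι_injective : Function.Injective ι
  exact_ι : Function.Exact ι (d 0)

variable {R}

/-- The complex underlying an injective resolution, as a coresolution by modules and linear maps. -/
noncomputable def InjectiveCoresolution.ofInjectiveResolution {N : Type u} [AddCommGroup N]
    [Module R N] (J : InjectiveResolution (ModuleCat.of R N)) : InjectiveCoresolution R N where
  X := J.cocomplex.X
  d n := (J.cocomplex.d n (n + 1)).hom
  injective n := (Module.injective_iff_injective_object R _).2 (J.injective n)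
  exact n := (ShortComplex.ShortExact.moduleCat_exact_iff_function_exact _).1 (J.exact_succ n)
  ι := (J.ι.f 0).hom
  ι_injective := (ModuleCat.mono_iff_injective (J.ι.f 0)).1 inferInstance
  exact_ι := (ShortComplex.ShortExact.moduleCat_exact_iff_function_exact _).1 J.exact₀

theorem injective_prod {M N : Type u} [AddCommGroup M] [Module R M] [AddCommGroup N] [Module R N]
    [Module.Injective R M] [Module.Injective R N] : Module.Injective R (M × N) where
  out X Y _ _ _ _ f hf g := by
    obtain ⟨a, ha⟩ := Module.Injective.out f hf (LinearMap.fst R M N ∘ₗ g)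
    obtain ⟨b, hb⟩ := Module.Injective.out f hf (LinearMap.snd R M N ∘ₗ g)
    exact ⟨a.prod b, fun x => Prod.ext (ha x) (hb x)⟩

theorem IsShortExact.injective_right {A B C : Type u} [AddCommGroup A] [Module R A]
    [AddCommGroup B] [Module R B] [AddCommGroup C] [Module R C] {f : A →ₗ[R] B} {g : B →ₗ[R] C}
    (h : IsShortExact R f g) (hA : Module.Injective R A) (hB : Module.Injective R B) :
    Module.Injective R C := by
  have : Injective (ModuleCat.of R A) := Module.injective_object_of_injective_module R A
  have : Injective (ModuleCat.of R B) := Module.injective_object_of_injective_module R B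
  rw [Module.injective_iff_injective_object, injective_iff_hasInjectiveDimensionLT_one]
  exact h.shortExact.hasInjectiveDimensionLT_X₃ 1 inferInstance inferInstance

namespace InjectiveComplex

/-- The `n`-cocycles of a complex. -/
abbrev cocycles (C : InjectiveComplex R) (n : ℕ) : Submodule R (C.X n) :=
  LinearMap.ker (C.d n)

/-- The differential of a complex, with values in cocycles. -/
def toCocycles (C : InjectiveComplex R) (n : ℕ) : C.X n →ₗ[R] C.cocycles (n + 1) :=
  (C.d n).codRestrict _ (C.exact n).apply_apply_eq_zero

theorem isShortExact_toCocycles (C : InjectiveComplex R) (n : ℕ) :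
    IsShortExact R (C.cocycles n).subtype (C.toCocycles n) := by
  have hker : LinearMap.ker (C.toCocycles n) = C.cocycles n := LinearMap.ker_codRestrict ..
  rw [← hker]
  refine .of_surjective fun z => ?_
  obtain ⟨x, hx⟩ := (C.exact n z).1 z.2
  exact ⟨x, Subtype.ext hx⟩

theorem injective_cocycles (C : InjectiveComplex R) (m n : ℕ)
    (h : HasInjectiveDimensionLT (ModuleCat.of R (C.cocycles m)) (n + 1)) :
    Module.Injective R (C.cocycles (m + n)) := by
  induction n generalizing m with
  | zero =>
    exact (Module.injective_iff_injective_object R _).2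
      (injective_iff_hasInjectiveDimensionLT_one.2 h)
  | succ n ih =>
    have := C.injective m
    have hX : Injective (C.X m) := Module.injective_object_of_injective_module R (C.X m)
    rw [← add_assoc, add_right_comm]
    exact ih (m + 1)
      (((C.isShortExact_toCocycles m).shortExact.hasInjectiveDimensionLT_X₃_iff n hX).2 h)

/-- The direct sum of `r` copies of a complex. -/
def pi (C : InjectiveComplex R) (r : ℕ) : InjectiveComplex R where
  X n := ModuleCat.of R (Fin r → C.X n)
  d n := (C.d n).compLeft (Fin r)
  injective n :=
    have := C.injective n
    inferInstanceAs (Module.Injective R (Fin r → C.X n))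
  exact n y := by
    refine ⟨fun hy => ?_, ?_⟩
    · choose x hx using fun t => (C.exact n (y t)).1 (congrFun hy t)
      exact ⟨x, funext hx⟩
    · rintro ⟨x, rfl⟩
      exact funext fun t => (C.exact n).apply_apply_eq_zero (x t)

/-- The mapping cone of a chain map `φ`, without its term in degree `-1`. -/
def cone {C D : InjectiveComplex R} (φ : ∀ n, C.X n →ₗ[R] D.X n)
    (φ_d : ∀ n x, φ (n + 1) (C.d n x) = D.d n (φ n x)) : InjectiveComplex R where
  X n := ModuleCat.of R (D.X n × C.X (n + 1))
  d n := ((D.d n).coprod (φ (n + 1))).prod (-(C.d (n + 1) ∘ₗ LinearMap.snd R _ _))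
  injective n :=
    have := C.injective (n + 1)
    have := D.injective n
    injective_prod
  exact n := by
    rintro ⟨y, x⟩
    refine ⟨fun h => ?_, ?_⟩
    · obtain ⟨hy, hx⟩ := Prod.mk.inj h
      obtain ⟨x, rfl⟩ := (C.exact (n + 1) x).1 (neg_eq_zero.1 hx)
      obtain ⟨w, hw⟩ := (D.exact n (y + φ (n + 1) x)).1 (by simpa [φ_d] using hy)
      exact ⟨(w, -x), by simp [hw]⟩
    · rintro ⟨⟨y, x⟩, h⟩
      obtain ⟨rfl, rfl⟩ := Prod.mk.inj h
      simp [φ_d, (D.exact n).apply_apply_eq_zero, (C.exact (n + 1)).apply_apply_eq_zero]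

end InjectiveComplex

/-- The direct sum of `r` copies of a coresolution. -/
def InjectiveCoresolution.pi {N : Type u} [AddCommGroup N] [Module R N]
    (D : InjectiveCoresolution R N) (r : ℕ) : InjectiveCoresolution R (Fin r → N) where
  toInjectiveComplex := D.toInjectiveComplex.pi r
  ι := D.ι.compLeft (Fin r)
  ι_injective := D.ι_injective.comp_left
  exact_ι y := by
    refine ⟨fun hy => ?_, ?_⟩
    · choose x hx using fun t => (D.exact_ι (y t)).1 (congrFun hy t)
      exact ⟨x, funext hx⟩
    · rintro ⟨x, rfl⟩
      exact funext fun t => D.exact_ι.apply_apply_eq_zero (x t)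

/-- A complex of injective modules, exact in positive degrees, whose `0`-cocycles represent `M` up
to an injective submodule. Unlike injective coresolutions, these models are closed under mapping
cones of maps from modules to free modules. -/
structure InjectiveModel (R : Type u) [CommRing R] (M : Type u) [AddCommGroup M] [Module R M]
    extends InjectiveComplex R where
  π : toInjectiveComplex.cocycles 0 →ₗ[R] M
  π_surjective : Function.Surjective π
  injective_ker : Module.Injective R (LinearMap.ker π)

variable {K N M : Type u} [AddCommGroup K] [Module R K] [AddCommGroup N] [Module R N]
  [AddCommGroup M] [Module R M]

/-- The maps `φ n` form a chain map from a model to a coresolution which lifts `f`. -/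
structure IsChainLift (C : InjectiveModel R K) (D : InjectiveCoresolution R N) (f : K →ₗ[R] N)
    (φ : ∀ n, C.X n →ₗ[R] D.X n) : Prop where
  comm_d (n : ℕ) (x : C.X n) : φ (n + 1) (C.d n x) = D.d n (φ n x)
  comm_ι (z : C.cocycles 0) : φ 0 z = D.ι (f (C.π z))

namespace InjectiveModel

theorem injective_cocycles (C : InjectiveModel R M) {n : ℕ}
    (hM : HasInjectiveDimensionLT (ModuleCat.of R M) (n + 1)) :
    Module.Injective R (C.cocycles n) := by
  rw [← zero_add n]
  refine C.toInjectiveComplex.injective_cocycles 0 n ?_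
  have := C.injective_ker
  have : Injective (ModuleCat.of R (LinearMap.ker C.π)) :=
    Module.injective_object_of_injective_module R _
  have hker : HasInjectiveDimensionLT (ModuleCat.of R (LinearMap.ker C.π)) (n + 1) :=
    hasInjectiveDimensionLT_of_ge _ 1 (n + 1) (by lia)
  exact (IsShortExact.of_surjective C.π_surjective).shortExact.hasInjectiveDimensionLT_X₂ _ hker hM

end InjectiveModel

namespace IsChainLift

variable {C : InjectiveModel R K} {D : InjectiveCoresolution R N} {i : K →ₗ[R] N} {p : N →ₗ[R] M}
  {φ : ∀ n, C.X n →ₗ[R] D.X n}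

/-- The mapping cone of a chain map lifting a map of modules. -/
abbrev cone (hφ : IsChainLift C D i φ) : InjectiveComplex R :=
  InjectiveComplex.cone φ hφ.comm_d

/-- The cocycle `(ι y - φ x, d x)` of the mapping cone. -/
def coneCocycle (hφ : IsChainLift C D i φ) : N × C.X 0 →ₗ[R] hφ.cone.cocycles 0 :=
  LinearMap.codRestrict _
    ((D.ι ∘ₗ LinearMap.fst R N _ - φ 0 ∘ₗ LinearMap.snd R N _).prod (C.d 0 ∘ₗ LinearMap.snd R N _))
    (by
      rintro ⟨y, x⟩
      refine Prod.ext (?_ : D.d 0 (D.ι y - φ 0 x) + φ 1 (C.d 0 x) = 0) (?_ : -C.d 1 (C.d 0 x) = 0)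
      · rw [map_sub, D.exact_ι.apply_apply_eq_zero, hφ.comm_d, zero_sub, neg_add_cancel]
      · rw [(C.exact 0).apply_apply_eq_zero, neg_zero])

theorem coneCocycle_eq_iff (hφ : IsChainLift C D i φ) (y : N) (x : C.X 0)
    (z : hφ.cone.cocycles 0) :
    hφ.coneCocycle (y, x) = z ↔ D.ι y - φ 0 x = z.1.1 ∧ C.d 0 x = z.1.2 :=
  Subtype.ext_iff.trans Prod.ext_iff

theorem coneCocycle_surjective (hφ : IsChainLift C D i φ) :
    Function.Surjective hφ.coneCocycle := by
  rintro ⟨⟨y, x⟩, h⟩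
  obtain ⟨hy, hx⟩ := Prod.mk.inj h
  obtain ⟨x, rfl⟩ := (C.exact 0 x).1 (neg_eq_zero.1 hx)
  obtain ⟨w, hw⟩ := (D.exact_ι (y + φ 0 x)).1 (by simpa [hφ.comm_d] using hy)
  exact ⟨(w, x), (hφ.coneCocycle_eq_iff ..).2 ⟨sub_eq_of_eq_add hw, rfl⟩⟩

theorem coneCocycle_eq_zero_iff (hφ : IsChainLift C D i φ) (y : N) (x : C.X 0) :
    hφ.coneCocycle (y, x) = 0 ↔ ∃ z : C.cocycles 0, z = x ∧ i (C.π z) = y := by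
  have ι_eq (z : C.cocycles 0) : D.ι y - φ 0 z = 0 ↔ i (C.π z) = y := by
    rw [hφ.comm_ι, sub_eq_zero, D.ι_injective.eq_iff, eq_comm]
  rw [coneCocycle_eq_iff]
  constructor
  · rintro ⟨hy, hx⟩
    exact ⟨⟨x, hx⟩, rfl, (ι_eq ⟨x, hx⟩).1 hy⟩
  · rintro ⟨z, rfl, hz⟩
    exact ⟨(ι_eq z).2 hz, z.2⟩

theorem exists_factor_coneCocycle (hφ : IsChainLift C D i φ) (h : IsShortExact R i p) :
    ∃ π : hφ.cone.cocycles 0 →ₗ[R] M, π ∘ₗ hφ.coneCocycle = p ∘ₗ LinearMap.fst R N (C.X 0) := by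
  refine (IsShortExact.of_surjective hφ.coneCocycle_surjective).exists_factor _ ?_
  ext ⟨⟨y, x⟩, hyx⟩
  obtain ⟨z, -, rfl⟩ := (hφ.coneCocycle_eq_zero_iff y x).1 hyx
  exact h.2.2.apply_apply_eq_zero (C.π z)

/-- The map from the `0`-cocycles of the mapping cone of a lift of `i` to the cokernel of `i`. -/
noncomputable def coneπ (hφ : IsChainLift C D i φ) (h : IsShortExact R i p) :
    hφ.cone.cocycles 0 →ₗ[R] M :=
  (hφ.exists_factor_coneCocycle h).choose

theorem coneπ_coneCocycle (hφ : IsChainLift C D i φ) (h : IsShortExact R i p) (y : N) (x : C.X 0) :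
    hφ.coneπ h (hφ.coneCocycle (y, x)) = p y :=
  LinearMap.congr_fun (hφ.exists_factor_coneCocycle h).choose_spec (y, x)

theorem exists_isShortExact_ker_coneπ (hφ : IsChainLift C D i φ) (h : IsShortExact R i p) :
    ∃ q : C.X 0 →ₗ[R] LinearMap.ker (hφ.coneπ h),
      IsShortExact R ((C.cocycles 0).subtype ∘ₗ (LinearMap.ker C.π).subtype) q := by
  let q := (hφ.coneCocycle ∘ₗ LinearMap.inr R N (C.X 0)).codRestrict (LinearMap.ker (hφ.coneπ h))
    fun x => by simp [coneπ_coneCocycle]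
  refine ⟨q, Subtype.val_injective.comp Subtype.val_injective, ?_, fun x => ?_⟩
  · rintro ⟨c, hc⟩
    obtain ⟨⟨y, x⟩, rfl⟩ := hφ.coneCocycle_surjective c
    obtain ⟨k, rfl⟩ := (h.2.2 y).1 ((hφ.coneπ_coneCocycle h y x).symm.trans hc)
    obtain ⟨z, rfl⟩ := C.π_surjective k
    have hz : hφ.coneCocycle (i (C.π z), z) = 0 := (hφ.coneCocycle_eq_zero_iff _ _).2 ⟨z, rfl, rfl⟩
    refine ⟨x - z, Subtype.ext ?_⟩
    calc hφ.coneCocycle (0, x - z)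
        = hφ.coneCocycle (i (C.π z), x) - hφ.coneCocycle (i (C.π z), z) := by
          rw [← map_sub, Prod.mk_sub_mk, sub_self]
      _ = hφ.coneCocycle (i (C.π z), x) := by rw [hz, sub_zero]
  · refine Subtype.ext_iff.trans ((hφ.coneCocycle_eq_zero_iff 0 x).trans ?_)
    simp only [map_eq_zero_iff i h.1]
    exact ⟨fun ⟨z, hzx, hz⟩ => ⟨⟨z, hz⟩, hzx⟩, fun ⟨z, hzx⟩ => ⟨z, hzx, z.2⟩⟩

/-- The mapping cone of a lift of `i` models the cokernel of `i`. -/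
noncomputable def coneModel (hφ : IsChainLift C D i φ) (h : IsShortExact R i p) :
    InjectiveModel R M where
  toInjectiveComplex := hφ.cone
  π := hφ.coneπ h
  π_surjective m := by
    obtain ⟨y, rfl⟩ := h.2.1 m
    exact ⟨_, hφ.coneπ_coneCocycle h y 0⟩
  injective_ker := by
    obtain ⟨q, hq⟩ := hφ.exists_isShortExact_ker_coneπ h
    exact hq.injective_right C.injective_ker (C.injective 0)

end IsChainLift

end InjectiveComplexes

section FormPairing

variable {R}

/-- The action of linear forms on `R ^ r` on `X ^ r`, given by `ξ y = ∑ t, ξ (e t) • y t`. -/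
def formPairing {r : ℕ} {X : Type u} [AddCommGroup X] [Module R X] :
    Module.Dual R (Fin r → R) →ₗ[R] (Fin r → X) →ₗ[R] X :=
  LinearMap.mk₂ R (fun ξ y => ∑ t, ξ (Pi.single t 1) • y t)
    (by simp [add_smul, Finset.sum_add_distrib])
    (by simp [mul_smul, Finset.smul_sum])
    (by simp [Finset.sum_add_distrib])
    (fun a ξ y => by simp only [Pi.smul_apply, smul_comm _ a, Finset.smul_sum])

theorem formPairing_self {r : ℕ} (ξ : Module.Dual R (Fin r → R)) (y : Fin r → R) :
    formPairing ξ y = ξ y := by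
  conv_rhs => rw [pi_eq_sum_univ' y, map_sum]
  simp [formPairing, mul_comm]

theorem formPairing_compLeft {r : ℕ} {X Y : Type u} [AddCommGroup X] [Module R X] [AddCommGroup Y]
    [Module R Y] (f : X →ₗ[R] Y) (ξ : Module.Dual R (Fin r → R)) (y : Fin r → X) :
    formPairing ξ (f.compLeft (Fin r) y) = f (formPairing ξ y) := by
  simp [formPairing]

end FormPairing

section Socle

open IsLocalRing

variable {R} [IsLocalRing R]

variable (R) in
/-- The socle of a module over a local ring: the elements killed by the maximal ideal. -/
abbrev socle (X : Type u) [AddCommGroup X] [Module R X] : Submodule R X :=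
  Submodule.torsionBySet R X (maximalIdeal R)

theorem smul_eq_zero_of_mem_socle {X : Type u} [AddCommGroup X] [Module R X] {x : X}
    (hx : x ∈ socle R X) {a : R} (ha : a ∈ maximalIdeal R) : a • x = 0 :=
  (Submodule.mem_torsionBySet_iff _ _).1 hx ⟨a, ha⟩

theorem map_mem_socle {X Y : Type u} [AddCommGroup X] [Module R X] [AddCommGroup Y] [Module R Y]
    (f : X →ₗ[R] Y) {x : X} (hx : x ∈ socle R X) : f x ∈ socle R Y := by
  refine (Submodule.mem_torsionBySet_iff _ _).2 fun a => ?_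
  rw [← map_smul, smul_eq_zero_of_mem_socle hx a.2, map_zero]

theorem InjectiveComplex.exists_mem_socle_d_eq (C : InjectiveComplex R) {n : ℕ}
    (hC : Module.Injective R (C.cocycles n)) {z : C.X (n + 1)} (hz : z ∈ socle R (C.X (n + 1)))
    (hdz : C.d (n + 1) z = 0) : ∃ x ∈ socle R (C.X n), C.d n x = z := by
  let S := C.isShortExact_toCocycles n
  obtain ⟨ρ, hρ⟩ := Module.Injective.out _ S.1 LinearMap.id
  obtain ⟨s, hs⟩ := S.exists_factor (LinearMap.id - (C.cocycles n).subtype ∘ₗ ρ)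
    (LinearMap.ext fun y => sub_eq_zero.2 (congrArg Subtype.val (hρ y).symm))
  obtain ⟨x, hx⟩ := S.2.1 ⟨z, hdz⟩
  refine ⟨s ⟨z, hdz⟩, map_mem_socle s ((Submodule.mem_torsionBySet_iff _ _).2 fun a =>
    Subtype.ext ((Submodule.mem_torsionBySet_iff _ _).1 hz a)), ?_⟩
  have s_eq : s ⟨z, hdz⟩ = x - ρ x := by rw [← hx]; exact LinearMap.congr_fun hs x
  rw [s_eq, map_sub, (ρ x).2, sub_zero]
  exact congrArg Subtype.val hx

/-- Compatible lifts of the linear forms on `M` to chain maps from a model of `M` to `I`, such that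
a form with values in the maximal ideal lifts to a chain map which is zero on socles. -/
structure DualLift (I : InjectiveCoresolution R R) {M : Type u} [AddCommGroup M] [Module R M]
    (C : InjectiveModel R M) where
  map (n : ℕ) : Module.Dual R M →ₗ[R] C.X n →ₗ[R] I.X n
  isChainLift (ψ : Module.Dual R M) : IsChainLift C I ψ fun n => map n ψ
  map_socle (n : ℕ) (ψ : Module.Dual R M) (hψ : ∀ m, ψ m ∈ maximalIdeal R) (x : C.X n)
    (hx : x ∈ socle R (C.X n)) : map n ψ x = 0

namespace DualLift

variable {I : InjectiveCoresolution R R} {K M : Type u} [AddCommGroup K] [Module R K]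
  [AddCommGroup M] [Module R M]

theorem exists_of_subsingleton (I : InjectiveCoresolution R R) [Subsingleton M] :
    ∃ C : InjectiveModel R M, Nonempty (DualLift I C) := by
  have injective (X : Type u) [AddCommGroup X] [Module R X] [Subsingleton X] :
      Module.Injective R X := ⟨fun _ _ _ _ _ _ _ _ _ => ⟨0, fun _ => Subsingleton.elim _ _⟩⟩
  let C : InjectiveModel R M :=
    { X _ := ModuleCat.of R PUnit
      d _ := 0
      injective _ := injective PUnit
      exact _ _ := by simp
      π := 0
      π_surjective m := ⟨0, Subsingleton.elim _ _⟩
      injective_ker := injective _ }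
  exact ⟨C, ⟨{
    map _ := 0
    isChainLift ψ := ⟨by simp, fun z => by simp [Subsingleton.elim (C.π z) 0]⟩
    map_socle := by simp }⟩⟩

variable {r : ℕ} {i : K →ₗ[R] Fin r → R} {p : (Fin r → R) →ₗ[R] M} {C : InjectiveModel R K}

/-- The lift of a map to a finite free module assembled from the lifts of its coordinates. -/
def piMap (F : DualLift I C) (i : K →ₗ[R] Fin r → R) (n : ℕ) : C.X n →ₗ[R] (I.pi r).X n :=
  LinearMap.pi fun t => F.map n (LinearMap.proj t ∘ₗ i)

theorem isChainLift_piMap (F : DualLift I C) (i : K →ₗ[R] Fin r → R) :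
    IsChainLift C (I.pi r) i (F.piMap i) where
  comm_d n x := funext fun _ => (F.isChainLift _).comm_d n x
  comm_ι z := funext fun _ => (F.isChainLift _).comm_ι z

theorem piMap_eq_zero (F : DualLift I C) (hi : ∀ x t, i x t ∈ maximalIdeal R) {n : ℕ} {x : C.X n}
    (hx : x ∈ socle R (C.X n)) : F.piMap i n x = 0 :=
  funext fun t => F.map_socle n _ (fun m => hi m t) x hx

theorem formPairing_piMap (F : DualLift I C) (i : K →ₗ[R] Fin r → R)
    (ξ : Module.Dual R (Fin r → R)) (n : ℕ) (x : C.X n) :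
    formPairing ξ (F.piMap i n x) = F.map n (ξ ∘ₗ i) x := by
  have ξ_comp : ξ ∘ₗ i = ∑ t, ξ (Pi.single t 1) • (LinearMap.proj t ∘ₗ i) := by
    ext x
    simpa [formPairing] using (formPairing_self ξ (i x)).symm
  rw [ξ_comp, map_sum, LinearMap.sum_apply]
  simp only [map_smul, LinearMap.smul_apply]
  rfl

/-- The lifts of linear forms to the mapping cone: a form on `M` restricts to a form on the free
module covering `M`, which acts on the copies of `I` in the cone. -/
noncomputable def cone (F : DualLift I C) (h : IsShortExact R i p) :
    DualLift I ((F.isChainLift_piMap i).coneModel h) where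
  map n := LinearMap.lcomp R _ (LinearMap.fst R (Fin r → I.X n) (C.X (n + 1))) ∘ₗ
    formPairing ∘ₗ p.dualMap
  isChainLift ψ := by
    have ψ_comp : (ψ ∘ₗ p) ∘ₗ i = 0 := by
      rw [LinearMap.comp_assoc, h.comp_eq_zero, LinearMap.comp_zero]
    refine ⟨?_, fun z => ?_⟩
    · rintro n ⟨y, x⟩
      let u : Fin r → I.X (n + 1) := F.piMap i (n + 1) x
      have hu : formPairing (ψ ∘ₗ p) u = 0 := by
        rw [formPairing_piMap, ψ_comp, map_zero, LinearMap.zero_apply]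
      change formPairing (ψ ∘ₗ p) ((I.d n).compLeft (Fin r) y + u) = I.d n (formPairing (ψ ∘ₗ p) y)
      rw [map_add, hu, add_zero]
      exact formPairing_compLeft (I.d n) (ψ ∘ₗ p) y
    · obtain ⟨⟨y, x⟩, rfl⟩ := (F.isChainLift_piMap i).coneCocycle_surjective z
      let u : Fin r → I.X 0 := F.piMap i 0 x
      have hu : formPairing (ψ ∘ₗ p) u = 0 := by
        rw [formPairing_piMap, ψ_comp, map_zero, LinearMap.zero_apply]
      change formPairing (ψ ∘ₗ p) (I.ι.compLeft (Fin r) y - u) =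
        I.ι (ψ ((F.isChainLift_piMap i).coneπ h _))
      rw [IsChainLift.coneπ_coneCocycle, map_sub, hu, sub_zero,
        formPairing_compLeft, formPairing_self]
      rfl
  map_socle n ψ hψ := by
    rintro ⟨y, x⟩ hyx
    have hy (t) : y t ∈ socle R (I.X n) :=
      map_mem_socle (LinearMap.proj t ∘ₗ LinearMap.fst R (Fin r → I.X n) (C.X (n + 1))) hyx
    change ∑ t, ψ (p (Pi.single t 1)) • (y : Fin r → I.X n) t = 0
    exact Finset.sum_eq_zero fun t _ => smul_eq_zero_of_mem_socle (hy t) (hψ _)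

theorem exists_of_hasProjectiveDimensionLT [IsNoetherianRing R] (I : InjectiveCoresolution R R)
    (n : ℕ) {M : Type u} [AddCommGroup M] [Module R M] [Module.Finite R M]
    (hM : HasProjectiveDimensionLT (ModuleCat.of R M) n) :
    ∃ C : InjectiveModel R M, Nonempty (DualLift I C) := by
  induction n generalizing M with
  | zero =>
    have : Subsingleton M := ModuleCat.isZero_iff_subsingleton.1
      ((hasProjectiveDimensionLT_zero_iff_isZero _).1 hM)
    exact exists_of_subsingleton I
  | succ n ih =>
    obtain ⟨r, p, hp⟩ := IsMinimalCover.exists_of_finite R M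
    obtain ⟨C, ⟨F⟩⟩ := ih (hp.hasProjectiveDimensionLT_ker hM)
    exact ⟨_, ⟨F.cone (IsShortExact.of_surjective hp.surjective)⟩⟩

end DualLift

theorem InjectiveCoresolution.exists_mem_socle_d_eq [IsNoetherianRing R]
    (I : InjectiveCoresolution R R) {M : Type u} [AddCommGroup M] [Module R M] [Module.Finite R M]
    [Nontrivial M] {m n : ℕ} (hpd : HasProjectiveDimensionLT (ModuleCat.of R M) (m + 1))
    (hid : HasInjectiveDimensionLT (ModuleCat.of R M) (n + 1)) {y : I.X (n + 1)}
    (hy : y ∈ socle R (I.X (n + 1))) (hdy : I.d (n + 1) y = 0) :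
    ∃ x ∈ socle R (I.X n), I.d n x = y := by
  obtain ⟨r, p, hp⟩ := IsMinimalCover.exists_of_finite R M
  obtain ⟨C, ⟨F⟩⟩ := DualLift.exists_of_hasProjectiveDimensionLT I m
    (hp.hasProjectiveDimensionLT_ker hpd)
  let i := (LinearMap.ker p).subtype
  let φ (k : ℕ) : C.X k →ₗ[R] Fin r → I.X k := F.piMap i k
  let D := (F.isChainLift_piMap i).coneModel (IsShortExact.of_surjective hp.surjective)
  have hr : Nonempty (Fin r) := by
    by_contra hr
    rw [not_nonempty_iff] at hr
    exact not_subsingleton M hp.surjective.subsingleton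
  obtain ⟨t⟩ := hr
  let u : Fin r → I.X (n + 1) := Pi.single t y
  let z : D.X (n + 1) := (u, 0)
  have hz : z ∈ socle R (D.X (n + 1)) :=
    map_mem_socle (LinearMap.inl R (Fin r → I.X (n + 1)) (C.X (n + 2)) ∘ₗ
      LinearMap.single R (fun _ => I.X (n + 1)) t) hy
  have hdu : (I.d (n + 1)).compLeft (Fin r) u = 0 := funext fun s =>
    (Pi.apply_single (fun _ => I.d (n + 1)) (fun _ => map_zero _) t y s).trans (by simp [hdy])
  have hdz_fst : (I.d (n + 1)).compLeft (Fin r) u + φ (n + 2) 0 = 0 := by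
    rw [hdu, map_zero, add_zero]
  have hdz : D.d (n + 1) z = 0 := Prod.ext hdz_fst (by simp : -C.d (n + 2) 0 = 0)
  obtain ⟨⟨w, x⟩, hwx, d_wx⟩ := D.toInjectiveComplex.exists_mem_socle_d_eq
    (D.injective_cocycles hid) hz hdz
  have hw : w t ∈ socle R (I.X n) :=
    map_mem_socle (LinearMap.proj t ∘ₗ LinearMap.fst R (Fin r → I.X n) (C.X (n + 1))) hwx
  have hx : x ∈ socle R (C.X (n + 1)) :=
    map_mem_socle (LinearMap.snd R (Fin r → I.X n) (C.X (n + 1))) hwx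
  have d_w : (I.d n).compLeft (Fin r) w + φ (n + 1) x = u := congrArg Prod.fst d_wx
  have φ_x : φ (n + 1) x = 0 := F.piMap_eq_zero (fun k => hp.mem_maximalIdeal k.1 k.2) hx
  rw [φ_x, add_zero] at d_w
  have u_t : u t = y := by simp [u]
  exact ⟨w t, hw, u_t ▸ congrFun d_w t⟩

theorem subsingleton_ext_residue_of_socle {N : Type u} [AddCommGroup N] [Module R N]
    (J : InjectiveResolution (ModuleCat.of R N)) {n : ℕ}
    (h : ∀ y ∈ socle R (J.cocomplex.X (n + 1)), J.cocomplex.d (n + 1) (n + 2) y = 0 →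
      ∃ x ∈ socle R (J.cocomplex.X n), J.cocomplex.d n (n + 1) x = y) :
    Subsingleton (ModuleExt R (R ⧸ maximalIdeal R) N (n + 1)) := by
  refine subsingleton_of_forall_eq 0 fun α => ?_
  obtain ⟨f, hf, rfl⟩ := J.extMk_surjective α (n + 2) rfl
  have hy : f.hom (Submodule.Quotient.mk 1) ∈ socle R (J.cocomplex.X (n + 1)) := by
    refine map_mem_socle f.hom ((Submodule.mem_torsionBySet_iff _ _).2 fun a => ?_)
    exact (Submodule.Quotient.mk_eq_zero _).2 (Ideal.mul_mem_right _ _ a.2)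
  obtain ⟨x, hx, d_x⟩ := h _ hy (LinearMap.congr_fun (congrArg ModuleCat.Hom.hom hf) _)
  let g : R ⧸ maximalIdeal R →ₗ[R] J.cocomplex.X n :=
    Submodule.liftQ _ (LinearMap.toSpanSingleton R _ x) fun a ha => smul_eq_zero_of_mem_socle hx ha
  refine (J.extMk_eq_zero_iff f (n + 2) rfl hf n rfl).2 ⟨ModuleCat.ofHom g, ?_⟩
  ext
  exact (congrArg (J.cocomplex.d n (n + 1)) (one_smul R x)).trans d_x

end Socle

section VanishingOnQuotients

open IsLocalRing

variable {R} {Y : Type u} [AddCommGroup Y] [Module R Y]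

theorem IsShortExact.subsingleton_ext_of_smul [IsLocalRing R] [IsNoetherianRing R]
    [Module.Finite R Y] {T C : Type u} [AddCommGroup T] [Module R T] [Module.Finite R T]
    [AddCommGroup C] [Module R C] {x : R} (hx : x ∈ maximalIdeal R) {g : T →ₗ[R] C}
    (h : IsShortExact R (LinearMap.lsmul R T x) g) {n : ℕ}
    (hC : Subsingleton (ModuleExt R C Y (n + 1))) : Subsingleton (ModuleExt R T Y n) := by
  have : Module.Finite R (ModuleExt R T Y n) := ModuleCat.finite_ext _ _ _ n
  have le_smul : (⊤ : Submodule R (ModuleExt R T Y n)) ≤ Ideal.span {x} • ⊤ := by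
    intro α _
    obtain ⟨β, hβ⟩ := Abelian.Ext.contravariant_sequence_exact₁ h.shortExact
      (ModuleCat.of R Y) α (add_comm 1 n) (Subsingleton.elim _ _)
    have lsmul_comp : (Abelian.Ext.mk₀ (x • 𝟙 (ModuleCat.of R T))).comp β (zero_add n) = x • β := by
      rw [Abelian.Ext.mk₀_smul, Abelian.Ext.smul_comp, Abelian.Ext.mk₀_id_comp]
    exact lsmul_comp.symm.trans hβ ▸
      Submodule.smul_mem_smul (Ideal.mem_span_singleton_self x) trivial
  have le_jacobson : Ideal.span {x} ≤ Ideal.jacobson ⊥ :=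
    ((Ideal.span_singleton_le_iff_mem _).2 hx).trans (maximalIdeal_le_jacobson ⊥)
  exact (Submodule.subsingleton_iff R).1 (subsingleton_of_top_eq_bot
    (Submodule.eq_bot_of_le_smul_of_le_jacobson_bot _ _ Module.Finite.fg_top le_smul le_jacobson))

theorem exists_isShortExact_lsmul_of_prime (p : Ideal R) [p.IsPrime] {x : R} (hx : x ∉ p) :
    ∃ q : R ⧸ p →ₗ[R] R ⧸ (p ⊔ Ideal.span {x}),
      IsShortExact R (LinearMap.lsmul R (R ⧸ p) x) q := by
  refine ⟨Submodule.mapQ p _ LinearMap.id le_sup_left, ?_, ?_, ?_⟩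
  · refine (injective_iff_map_eq_zero _).2 fun t ht => ?_
    obtain ⟨a, rfl⟩ := Ideal.Quotient.mk_surjective t
    have hxa : x * a ∈ p := (Submodule.Quotient.mk_eq_zero p).1 ht
    exact Ideal.Quotient.eq_zero_iff_mem.2 ((‹p.IsPrime›.mem_or_mem hxa).resolve_left hx)
  · rintro ⟨a⟩
    exact ⟨Submodule.Quotient.mk a, rfl⟩
  · rintro ⟨a⟩
    refine (Submodule.Quotient.mk_eq_zero _).trans (Submodule.mem_sup.trans ⟨?_, ?_⟩)
    · rintro ⟨b, hb, c, hc, rfl⟩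
      obtain ⟨s, rfl⟩ := Ideal.mem_span_singleton.1 hc
      exact ⟨Submodule.Quotient.mk s, (Submodule.Quotient.eq p).2 (by simpa using hb)⟩
    · rintro ⟨⟨s⟩, hs⟩
      have hsub : x * s - a ∈ p := (Submodule.Quotient.eq p).1 hs
      exact ⟨a - x * s, by simpa using p.neg_mem hsub, x * s,
        Ideal.mul_mem_right _ _ (Ideal.mem_span_singleton_self x), sub_add_cancel a _⟩

theorem subsingleton_ext_of_prime [IsNoetherianRing R] {a : Ideal R} {n : ℕ}
    (h : ∀ p : Ideal R, p.IsPrime → a ≤ p → Subsingleton (ModuleExt R (R ⧸ p) Y n)) (T : Type u)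
    [AddCommGroup T] [Module R T] [hT : Module.Finite R T] (ha : a ≤ Module.annihilator R T) :
    Subsingleton (ModuleExt R T Y n) := by
  induction hT using IsNoetherianRing.induction_on_isQuotientEquivQuotientPrime R with
  | subsingleton T =>
    have : HasProjectiveDimensionLT (ModuleCat.of R T) 0 :=
      (hasProjectiveDimensionLT_zero_iff_isZero _).2 (ModuleCat.isZero_of_subsingleton _)
    exact HasProjectiveDimensionLT.subsingleton _ 0 n (Nat.zero_le n) _
  | exact A B C f g hf hg hfg hA hC =>
    exact IsShortExact.subsingleton_ext_middle ⟨hf, hg, hfg⟩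
      (hA (ha.trans (f.annihilator_le_of_injective hf)))
      (hC (ha.trans (g.annihilator_le_of_surjective hg)))
  | quotient T p e =>
    rw [e.annihilator_eq, Ideal.annihilator_quotient] at ha
    exact subsingleton_ext_of_linearEquiv e.symm (h p.1 p.2 ha)

theorem subsingleton_ext_of_residue [IsLocalRing R] [IsNoetherianRing R] [Module.Finite R Y] {m : ℕ}
    (hk : ∀ n ≥ m, Subsingleton (ModuleExt R (R ⧸ maximalIdeal R) Y n)) {n : ℕ} (hn : n ≥ m)
    (T : Type u) [AddCommGroup T] [Module R T] [Module.Finite R T] :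
    Subsingleton (ModuleExt R T Y n) := by
  refine subsingleton_ext_of_prime (a := ⊥) (fun p hp _ => ?_) T bot_le
  induction p using IsWellFounded.induction (fun a b : Ideal R => a > b) generalizing n with
  | ind p ih =>
  by_cases hpm : p = maximalIdeal R
  · exact hpm ▸ hk n hn
  obtain ⟨x, hxm, hxp⟩ := SetLike.exists_of_lt (lt_of_le_of_ne (le_maximalIdeal hp.ne_top) hpm)
  obtain ⟨q, hq⟩ := exists_isShortExact_lsmul_of_prime p hxp
  refine hq.subsingleton_ext_of_smul hxm (subsingleton_ext_of_prime (fun p' hp' hle => ?_) _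
    Ideal.annihilator_quotient.ge)
  have hx : x ∈ p' := hle (Ideal.mem_sup_right (Ideal.mem_span_singleton_self x))
  have p_lt : p < p' := lt_of_le_of_ne (le_sup_left.trans hle) fun h => hxp (h ▸ hx)
  exact ih p' p_lt (by omega) hp' bot_le

theorem injective_of_subsingleton_ext_one
    (h : ∀ a : Ideal R, Subsingleton (ModuleExt R (R ⧸ a) Y 1)) : Module.Injective R Y :=
  Module.Baer.injective fun a φ => by
    have S : IsShortExact R a.subtype a.mkQ :=
      ⟨a.injective_subtype, a.mkQ_surjective, LinearMap.exact_subtype_mkQ a⟩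
    obtain ⟨ψ, hψ⟩ := S.exists_extend (h a) φ
    exact ⟨ψ, fun x hx => LinearMap.congr_fun hψ ⟨x, hx⟩⟩

theorem hasInjectiveDimensionLT_of_subsingleton_ext {n : ℕ}
    (h : ∀ a : Ideal R, Subsingleton (ModuleExt R (R ⧸ a) Y (n + 1))) :
    HasInjectiveDimensionLT (ModuleCat.of R Y) (n + 1) := by
  induction n generalizing Y with
  | zero =>
    rw [← injective_iff_hasInjectiveDimensionLT_one, ← Module.injective_iff_injective_object]
    exact injective_of_subsingleton_ext_one h
  | succ n ih =>
    let E := Injective.under (ModuleCat.of R Y)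
    have hE : Injective (ModuleCat.of R E) := Injective.injective_under (ModuleCat.of R Y)
    have S := IsShortExact.of_injective (R := R)
      ((ModuleCat.mono_iff_injective (Injective.ι (ModuleCat.of R Y))).1 inferInstance)
    refine (S.shortExact.hasInjectiveDimensionLT_X₃_iff n hE).1 (ih fun a => ?_)
    refine subsingleton_of_forall_eq 0 fun α => ?_
    obtain ⟨β, rfl⟩ := Abelian.Ext.covariant_sequence_exact₃ _ S.shortExact α rfl
      ((h a).elim _ _)
    rw [Abelian.Ext.eq_zero_of_injective β, Abelian.Ext.zero_comp]

end VanishingOnQuotients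

theorem stmt1 (R : Type u) [CommRing R] [IsNoetherianRing R] [IsLocalRing R]
    (M : Type u) [AddCommGroup M] [Module R M] [Module.Finite R M] [Nontrivial M]
    (hinj : ∃ n : ℕ, InjdimLE R n (ModuleCat.of R M))
    (hG : ∃ n : ℕ, GdimLE R n (ModuleCat.of R M)) : IsGorensteinRing R := by
  obtain ⟨n, hid⟩ := hinj
  obtain ⟨m, hG⟩ := hG
  rw [injdimLE_iff_hasInjectiveDimensionLT] at hid
  have hpd := hasProjectiveDimensionLT_of_gdimLE_of_hasInjectiveDimensionLT hG hid
  let J := injectiveResolution (ModuleCat.of R R)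
  let I := InjectiveCoresolution.ofInjectiveResolution J
  have ext_residue : ∀ k ≥ n + 1,
      Subsingleton (ModuleExt R (R ⧸ IsLocalRing.maximalIdeal R) R k) := by
    intro k hk
    obtain ⟨k, rfl⟩ := Nat.exists_eq_succ_of_ne_zero (show k ≠ 0 by omega)
    have := hasInjectiveDimensionLT_of_ge (ModuleCat.of R M) (n + 1) (k + 1) hk
    exact subsingleton_ext_residue_of_socle J fun y hy hdy =>
      I.exists_mem_socle_d_eq hpd this hy hdy
  refine ⟨n, (injdimLE_iff_hasInjectiveDimensionLT n _).2 ?_⟩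
  exact hasInjectiveDimensionLT_of_subsingleton_ext fun a =>
    subsingleton_ext_of_residue ext_residue le_rfl (R ⧸ a)
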